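/- arXiv:0804.1397 — 5 statements merged into one kernel-verified Lean document; each statement's English description precedes it below -/
import Mathlib

section
/- Let μ be a probability mass function on the nonnegative integers with finite mean ρ = Σ_k k·μ(k) and finite, strictly positive variance σ² = Σ_k (k−ρ)²·μ(k). Define μ̂(k) = σ^{-2} · Σ_{y=k+1}^{∞} (y−ρ)·μ(y). Then μ̂(k) ≥ 0 for every nonnegative integer k and Σ_{k=0}^{∞} μ̂(k) = 1; that is, μ̂ is again a probability mass function on the nonnegative integers. -/
theorem hat_aux_fib (y : ℕ) (c : ℝ) :
    HasSum (fun k : ℕ => if k < y then c else 0) ((y : ℝ) * c) := by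
  have h : HasSum (fun k : ℕ => if k < y then c else 0)
      (∑ k ∈ Finset.range y, if k < y then c else 0) :=
    hasSum_sum_of_ne_finset_zero (by
      intro k hk
      rw [Finset.mem_range] at hk
      simp [hk])
  have e : (∑ k ∈ Finset.range y, if k < y then c else 0) = (y : ℝ) * c := by
    rw [Finset.sum_congr rfl (g := fun _ => c)
      (fun k hk => if_pos (Finset.mem_range.mp hk))]
    simp
  rwa [e] at h

/-- If `μ` is a probability mass function on the nonnegative integers with finite mean `rho`
and finite, strictly positive variance `σ²`, then
`μ̂ k = σ⁻² * ∑_{y > k} (y - rho) * μ y` is again a probability mass function: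
it is nonnegative and sums to `1`. -/
theorem hat_measure_is_probability
    (μ : ℕ → ℝ) (hμ : ∀ k, 0 ≤ μ k) (hsum : HasSum μ 1)
    (rho σ2 : ℝ) (hσ2 : 0 < σ2)
    (hmean : HasSum (fun k : ℕ => (k : ℝ) * μ k) rho)
    (hvar : HasSum (fun k : ℕ => ((k : ℝ) - rho) ^ 2 * μ k) σ2) :
    (∀ k : ℕ,
      0 ≤ σ2⁻¹ * ∑' y : ℕ, (if k < y then ((y : ℝ) - rho) * μ y else 0)) ∧
    HasSum (fun k : ℕ =>
      σ2⁻¹ * ∑' y : ℕ, (if k < y then ((y : ℝ) - rho) * μ y else 0)) 1 := by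
  have hg : HasSum (fun y : ℕ => ((y : ℝ) - rho) * μ y) 0 := by
    have := hmean.sub (hsum.mul_left rho)
    simp only [mul_one, sub_self] at this
    exact this.congr_fun (fun y => by ring)
  have hyg : HasSum (fun y : ℕ => (y : ℝ) * (((y : ℝ) - rho) * μ y)) σ2 := by
    have := hvar.add (hg.mul_left rho)
    simp only [mul_zero, add_zero] at this
    exact this.congr_fun (fun y => by ring)
  constructor
  · intro k
    refine mul_nonneg (inv_nonneg.mpr hσ2.le) ?_
    by_cases hk : rho ≤ k
    · refine tsum_nonneg fun y => ?_
      split_ifs with h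
      · have : (k : ℝ) < y := by exact_mod_cast h
        exact mul_nonneg (by linarith) (hμ y)
      · exact le_rfl
    · push Not at hk
      have hle : HasSum (fun y : ℕ => if y ∈ Finset.range (k+1) then ((y : ℝ) - rho) * μ y else 0)
          (∑ y ∈ Finset.range (k+1), if y ∈ Finset.range (k+1) then ((y : ℝ) - rho) * μ y else 0) :=
        hasSum_sum_of_ne_finset_zero (fun y hy => if_neg hy)
      have h2 := (hg.sub hle).congr_fun
        (g := fun y : ℕ => if k < y then ((y : ℝ) - rho) * μ y else 0) (fun y => by
          by_cases h : k < y
          · have : ¬ y < k + 1 := by omega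
            simp [h, this]
          · have : y < k + 1 := by omega
            simp [h, this])
      rw [h2.tsum_eq, zero_sub, neg_nonneg]
      refine Finset.sum_nonpos fun y hy => ?_
      rw [if_pos hy]
      have : (y : ℝ) ≤ k := by
        have := Finset.mem_range.mp hy
        exact_mod_cast (by omega : y ≤ k)
      exact mul_nonpos_of_nonpos_of_nonneg (by linarith) (hμ y)
  · have hS : Summable (fun p : ℕ × ℕ => if p.2 < p.1 then ((p.1 : ℝ) - rho) * μ p.1 else 0) := by
      rw [← summable_abs_iff, summable_prod_of_nonneg (fun p => abs_nonneg _)]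
      constructor
      · intro y
        exact (hat_aux_fib y (((y : ℝ) - rho) * μ y)).summable.abs
      · have e : ∀ y : ℕ, ∑' k : ℕ, |if k < y then ((y : ℝ) - rho) * μ y else 0|
            = |(y : ℝ) * (((y : ℝ) - rho) * μ y)| := by
          intro y
          rw [abs_mul, Nat.abs_cast, ← (hat_aux_fib y _).tsum_eq]
          refine tsum_congr fun k => ?_
          split_ifs <;> simp
        simp only [e]
        exact hyg.summable.abs
    have h1 := hS.hasSum
    have h2 := h1.prod_fiberwise (fun y => hat_aux_fib y (((y : ℝ) - rho) * μ y))
    have hv := h2.unique hyg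
    rw [hv] at h1
    have h3 := (Equiv.prodComm ℕ ℕ).hasSum_iff.mpr h1
    have h4 := h3.prod_fiberwise (fun k => (h3.summable.prod_factor k).hasSum)
    have h5 := h4.mul_left σ2⁻¹
    rw [inv_mul_cancel₀ hσ2.ne'] at h5
    exact h5
end

section
/- For every real ρ > 0 and every nonnegative integer k, (1/(ρ(1+ρ))) · Σ_{y=k+1}^{∞} (y−ρ)·(ρ/(1+ρ))^y·(1/(1+ρ)) = (k+1)·(ρ/(1+ρ))^k·(1/(1+ρ))². In particular, the measure μ̂_ρ associated to the geometric distribution μ_ρ (whose variance is ρ(1+ρ)) is the negative binomial distribution with parameters 2 and success probability 1/(1+ρ). -/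
/-- For the geometric distribution `μ_rho` (mean `rho`, variance `rho*(1+rho)`), the
associated measure `μ̂_rho(k) = (rho(1+rho))⁻¹ ∑_{y>k} (y-rho) μ_rho(y)` equals the
negative binomial distribution with parameters `2` and success probability `1/(1+rho)`. -/
theorem hat_mu_of_geometric_eq_negBinomial
    (rho : ℝ) (hrho : 0 < rho) (k : ℕ) :
    (1 / (rho * (1 + rho))) *
        ∑' y : ℕ,
          (if k < y then ((y : ℝ) - rho) * (rho / (1 + rho)) ^ y * (1 / (1 + rho)) else 0) =
      ((k : ℝ) + 1) * (rho / (1 + rho)) ^ k * (1 / (1 + rho)) ^ 2 := by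
  have h1 : (0 : ℝ) < 1 + rho := by linarith
  set r : ℝ := rho / (1 + rho) with hr
  have hr0 : 0 ≤ r := by positivity
  have hr1 : r < 1 := by rw [hr, div_lt_one h1]; linarith
  have hn : ‖r‖ < 1 := by rw [Real.norm_of_nonneg hr0]; exact hr1
  have hsub : 1 - r = 1 / (1 + rho) := by rw [hr]; field_simp; ring
  have A := hasSum_coe_mul_geometric_of_norm_lt_one hn
  have B := hasSum_geometric_of_norm_lt_one hn
  have C := (A.add (B.mul_left ((k : ℝ) + 1 - rho))).mul_left (r ^ (k + 1) * (1 / (1 + rho)))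
  have D : HasSum (fun y : ℕ =>
      (if k < y then ((y : ℝ) - rho) * r ^ y * (1 / (1 + rho)) else 0))
      (r ^ (k + 1) * ((k : ℝ) + 1)) := by
    rw [← hasSum_nat_add_iff' (k + 1)]
    have hz : ∑ y ∈ Finset.range (k + 1),
        (if k < y then ((y : ℝ) - rho) * r ^ y * (1 / (1 + rho)) else 0) = 0 := by
      apply Finset.sum_eq_zero
      intro y hy
      rw [if_neg]
      have := Finset.mem_range.mp hy
      omega
    rw [hz, sub_zero]
    convert C using 1
    · rfl
    · funext n
      rw [if_pos (by omega)]
      push_cast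
      ring
    · rw [hsub, mul_assoc]
      congr 1
      rw [hr]
      field_simp
      ring
  rw [D.tsum_eq, pow_succ]
  have : r = rho * (1 / (1 + rho)) := by rw [hr]; ring
  generalize r ^ k = p
  rw [this]
  field_simp
end

section
/- Let 0 < λ < ρ, let u ≥ 1 and d ≥ 0 be integers, and let 0 < α < (1/4)·log((1+λ)/λ). Let Y, Z, W be random variables on a common probability space (with arbitrary joint distribution) whose marginal distributions are: Y negative binomial with parameters 2u−1 and 1/(1+ρ), Z negative binomial with parameters 2u−1 and 1/(1+λ), and W negative binomial with parameters 2 and 1/(1+λ). Then P(Y − Z − W < u(ρ−λ) + d) ≤ exp(α·u·(ρ−λ) + d·α) · (1 + ρ(1 − e^{−4α}))^{−(2u−1)/4} · (1 + λ(1 − e^{4α}))^{−(2u−1)/4} · (1 + λ(1 − e^{2α}))^{−1}. -/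
open MeasureTheory ProbabilityTheory ENNReal

/-- The negative binomial probability mass function with parameters `n` and success
probability `1/(1+lam)` (so failure probability `lam/(1+lam)`). -/
noncomputable def negBinPMF (n : ℕ) (lam : ℝ) (z : ℕ) : ℝ :=
  (Nat.choose (n + z - 1) (n - 1) : ℝ) * (lam / (1 + lam)) ^ z * (1 / (1 + lam)) ^ n

lemma negBin_mgf (n : ℕ) (lam β : ℝ) (hlam : 0 < lam) (hβ : lam * Real.exp β < 1 + lam)
    {Ω : Type*} [MeasurableSpace Ω] (P : Measure Ω)
    (X : Ω → ℕ) (hX : Measurable X)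
    (hlaw : ∀ k : ℕ, P {ω | X ω = k} = ENNReal.ofReal (negBinPMF (n + 1) lam k)) :
    ∫⁻ ω, ENNReal.ofReal (Real.exp (β * X ω)) ∂P =
      ENNReal.ofReal ((1 + lam * (1 - Real.exp β)) ^ (-((n : ℝ) + 1))) := by
  have h1 : 0 < 1 + lam := by linarith
  have hpos : 0 < 1 + lam * (1 - Real.exp β) := by linarith
  have e1 : ∫⁻ ω, ENNReal.ofReal (Real.exp (β * X ω)) ∂P
      = ∫⁻ k, ENNReal.ofReal (Real.exp (β * (k : ℕ))) ∂(P.map X) :=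
    (lintegral_map (f := fun k : ℕ => ENNReal.ofReal (Real.exp (β * (k : ℕ))))
      (measurable_of_countable _) hX).symm
  rw [e1, lintegral_countable']
  have e2 : ∀ k : ℕ, (P.map X) {k} = ENNReal.ofReal (negBinPMF (n + 1) lam k) := by
    intro k
    rw [Measure.map_apply hX (measurableSet_singleton k), ← hlaw k]
    rfl
  have hr : ‖lam * Real.exp β / (1 + lam)‖ < 1 := by
    rw [Real.norm_of_nonneg (by positivity), div_lt_one h1]
    exact hβ
  have hs := (hasSum_choose_mul_geometric_of_norm_lt_one n hr).mul_right ((1 / (1 + lam)) ^ (n + 1))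
  have e3 : ∀ k : ℕ, ENNReal.ofReal (Real.exp (β * (k : ℕ))) * (P.map X) {k} =
      ENNReal.ofReal (((k + n).choose n : ℝ) * (lam * Real.exp β / (1 + lam)) ^ k
        * (1 / (1 + lam)) ^ (n + 1)) := by
    intro k
    rw [e2, ← ENNReal.ofReal_mul (Real.exp_pos _).le]
    congr 1
    have : n + 1 + k - 1 = k + n := by omega
    rw [negBinPMF, this, Nat.add_sub_cancel, mul_comm β, Real.exp_nat_mul, mul_div_right_comm,
      mul_pow]
    ring
  simp_rw [e3]
  rw [← ENNReal.ofReal_tsum_of_nonneg (fun k => by positivity) hs.summable, hs.tsum_eq]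
  congr 1
  rw [Real.rpow_neg hpos.le, ← Nat.cast_succ, Real.rpow_natCast, one_div, ← inv_pow, one_div,
    ← mul_pow, ← inv_pow, ← mul_inv, Nat.succ_eq_add_one]
  congr 2
  field_simp
  ring

lemma holder3 {Ω : Type*} [MeasurableSpace Ω] (P : Measure Ω) (a b c : Ω → ℝ)
    (ha : Measurable a) (hb : Measurable b) (hc : Measurable c) :
    ∫⁻ ω, ENNReal.ofReal (Real.exp (a ω + b ω + c ω)) ∂P ≤
      (∫⁻ ω, ENNReal.ofReal (Real.exp (4 * a ω)) ∂P) ^ (1 / 4 : ℝ) *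
      (∫⁻ ω, ENNReal.ofReal (Real.exp (4 * b ω)) ∂P) ^ (1 / 4 : ℝ) *
      (∫⁻ ω, ENNReal.ofReal (Real.exp (2 * c ω)) ∂P) ^ (1 / 2 : ℝ) := by
  have h := ENNReal.lintegral_prod_norm_pow_le (μ := P) (Finset.univ : Finset (Fin 3))
    (f := ![fun ω => ENNReal.ofReal (Real.exp (4 * a ω)),
      fun ω => ENNReal.ofReal (Real.exp (4 * b ω)),
      fun ω => ENNReal.ofReal (Real.exp (2 * c ω))])
    (p := ![1 / 4, 1 / 4, 1 / 2])
    (by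
      intro i _
      fin_cases i
      · exact (by fun_prop : Measurable fun ω => ENNReal.ofReal (Real.exp (4 * a ω))).aemeasurable
      · exact (by fun_prop : Measurable fun ω => ENNReal.ofReal (Real.exp (4 * b ω))).aemeasurable
      · exact (by fun_prop : Measurable fun ω => ENNReal.ofReal (Real.exp (2 * c ω))).aemeasurable)
    (by simp [Fin.sum_univ_three]; norm_num)
    (by intro i _; fin_cases i <;> simp)
  simp only [Fin.prod_univ_three, Matrix.cons_val_zero, Matrix.cons_val_one,
    Matrix.cons_val_two, Matrix.vecHead, Matrix.vecTail, Function.comp, Fin.succ_zero_eq_one,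
    Matrix.cons_val] at h
  refine le_trans (le_of_eq ?_) h
  congr 1
  funext ω
  rw [ENNReal.ofReal_rpow_of_pos (Real.exp_pos _), ENNReal.ofReal_rpow_of_pos (Real.exp_pos _),
    ENNReal.ofReal_rpow_of_pos (Real.exp_pos _), ← Real.exp_mul, ← Real.exp_mul, ← Real.exp_mul,
    ← ENNReal.ofReal_mul (by positivity), ← ENNReal.ofReal_mul (by positivity),
    ← Real.exp_add, ← Real.exp_add]
  congr 2
  ring

/-- The explicit exponential-Chebyshev estimate behind Lemma 3.4: for `0 < lam < rho`,
integers `u ≥ 1`, `d ≥ 0`, and `0 < α < (1/4) log((1+lam)/lam)`, and random variables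
`Y, Z, W` (arbitrary joint law) with the prescribed negative binomial marginals,
`P(Y - Z - W < u(rho-lam) + d)` is bounded by
`exp(αu(rho-lam) + dα) (1+rho(1-e^{-4α}))^{-(2u-1)/4} (1+lam(1-e^{4α}))^{-(2u-1)/4}
 (1+lam(1-e^{2α}))^{-1}`. -/
theorem second_class_density_exponential_bound
    (rho lam : ℝ) (hlam : 0 < lam) (hll : lam < rho)
    (u d : ℕ) (hu : 1 ≤ u)
    (α : ℝ) (hα : 0 < α) (hα' : α < (1 / 4) * Real.log ((1 + lam) / lam))
    (Ω : Type*) [MeasurableSpace Ω] (P : Measure Ω) [IsProbabilityMeasure P]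
    (Y Z W : Ω → ℕ)
    (hY : Measurable Y) (hZ : Measurable Z) (hW : Measurable W)
    (hYlaw : ∀ k : ℕ, P {ω | Y ω = k} = ENNReal.ofReal (negBinPMF (2 * u - 1) rho k))
    (hZlaw : ∀ k : ℕ, P {ω | Z ω = k} = ENNReal.ofReal (negBinPMF (2 * u - 1) lam k))
    (hWlaw : ∀ k : ℕ, P {ω | W ω = k} = ENNReal.ofReal (negBinPMF 2 lam k)) :
    P {ω | ((Y ω : ℝ) - (Z ω : ℝ) - (W ω : ℝ)) < (u : ℝ) * (rho - lam) + (d : ℝ)} ≤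
      ENNReal.ofReal
        (Real.exp (α * (u : ℝ) * (rho - lam) + (d : ℝ) * α) *
          (1 + rho * (1 - Real.exp (-4 * α))) ^ (-(2 * (u : ℝ) - 1) / 4) *
          (1 + lam * (1 - Real.exp (4 * α))) ^ (-(2 * (u : ℝ) - 1) / 4) *
          (1 + lam * (1 - Real.exp (2 * α)))⁻¹) := by
  have hrho : 0 < rho := hlam.trans hll
  have h4 : lam * Real.exp (4 * α) < 1 + lam := by
    have : 4 * α < Real.log ((1 + lam) / lam) := by linarith
    rw [Real.lt_log_iff_exp_lt (by positivity), lt_div_iff₀ hlam] at this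
    linarith
  have h2 : lam * Real.exp (2 * α) < 1 + lam := by
    refine lt_of_le_of_lt ?_ h4
    gcongr
    linarith
  have hm4 : rho * Real.exp (-4 * α) < 1 + rho := by
    have : Real.exp (-4 * α) ≤ 1 := Real.exp_le_one_iff.2 (by linarith)
    nlinarith
  obtain ⟨n, hn⟩ : ∃ n, 2 * u - 1 = n + 1 := ⟨2 * u - 2, by omega⟩
  have hnr : (n : ℝ) + 1 = 2 * u - 1 := by
    have : 2 * u = n + 2 := by omega
    have : (2 * u : ℝ) = n + 2 := by exact_mod_cast this
    linarith
  rw [hn] at hYlaw hZlaw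
  have mY := negBin_mgf n rho (-4 * α) hrho hm4 P Y hY hYlaw
  have mZ := negBin_mgf n lam (4 * α) hlam h4 P Z hZ hZlaw
  have mW := negBin_mgf 1 lam (2 * α) hlam h2 P W hW hWlaw
  have pY : 0 < 1 + rho * (1 - Real.exp (-4 * α)) := by linarith
  have pZ : 0 < 1 + lam * (1 - Real.exp (4 * α)) := by linarith
  have pW : 0 < 1 + lam * (1 - Real.exp (2 * α)) := by linarith
  have hYr : Measurable fun ω => (Y ω : ℝ) := (measurable_of_countable _).comp hY
  have hZr : Measurable fun ω => (Z ω : ℝ) := (measurable_of_countable _).comp hZ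
  have hWr : Measurable fun ω => (W ω : ℝ) := (measurable_of_countable _).comp hW
  have hol := holder3 P (fun ω => -α * Y ω) (fun ω => α * Z ω) (fun ω => α * W ω)
    (hYr.const_mul _) (hZr.const_mul _) (hWr.const_mul _)
  have q1 : ∀ ω, 4 * (-α * (Y ω : ℝ)) = -4 * α * Y ω := fun ω => by ring
  have q2 : ∀ ω, 4 * (α * (Z ω : ℝ)) = 4 * α * Z ω := fun ω => by ring
  have q3 : ∀ ω, 2 * (α * (W ω : ℝ)) = 2 * α * W ω := fun ω => by ring
  simp only [q1, q2, q3] at hol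
  rw [mY, mZ, mW, ENNReal.ofReal_rpow_of_pos (by positivity),
    ENNReal.ofReal_rpow_of_pos (by positivity), ENNReal.ofReal_rpow_of_pos (by positivity),
    ← Real.rpow_mul pY.le, ← Real.rpow_mul pZ.le, ← Real.rpow_mul pW.le, hnr,
    ← ENNReal.ofReal_mul (by positivity), ← ENNReal.ofReal_mul (by positivity)] at hol
  have x1 : -(2 * (u : ℝ) - 1) * (1 / 4) = -(2 * (u : ℝ) - 1) / 4 := by ring
  have x2 : -(((1 : ℕ) : ℝ) + 1) * (1 / 2) = -1 := by norm_num
  rw [x1, x2, Real.rpow_neg_one] at hol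
  set t : ℝ := (u : ℝ) * (rho - lam) + d with ht
  have hc : α * (u : ℝ) * (rho - lam) + (d : ℝ) * α = α * t := by rw [ht]; ring
  rw [hc]
  have hms : MeasurableSet {ω | ((Y ω : ℝ) - (Z ω : ℝ) - (W ω : ℝ)) < t} :=
    measurableSet_lt ((hYr.sub hZr).sub hWr) measurable_const
  calc P {ω | ((Y ω : ℝ) - (Z ω : ℝ) - (W ω : ℝ)) < t}
      = ∫⁻ ω in {ω | ((Y ω : ℝ) - (Z ω : ℝ) - (W ω : ℝ)) < t}, 1 ∂P := by simp
    _ ≤ ∫⁻ ω in {ω | ((Y ω : ℝ) - (Z ω : ℝ) - (W ω : ℝ)) < t},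
          ENNReal.ofReal (Real.exp (α * t)) *
            ENNReal.ofReal (Real.exp (-α * Y ω + α * Z ω + α * W ω)) ∂P := by
        refine setLIntegral_mono' hms fun ω hω => ?_
        rw [← ENNReal.ofReal_mul (Real.exp_pos _).le, ← Real.exp_add, ENNReal.one_le_ofReal,
          Real.one_le_exp_iff]
        have : ((Y ω : ℝ) - (Z ω : ℝ) - (W ω : ℝ)) < t := hω
        nlinarith
    _ ≤ ∫⁻ ω, ENNReal.ofReal (Real.exp (α * t)) *
            ENNReal.ofReal (Real.exp (-α * Y ω + α * Z ω + α * W ω)) ∂P :=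
        setLIntegral_le_lintegral _ _
    _ = ENNReal.ofReal (Real.exp (α * t)) *
          ∫⁻ ω, ENNReal.ofReal (Real.exp (-α * Y ω + α * Z ω + α * W ω)) ∂P :=
        lintegral_const_mul' _ _ ENNReal.ofReal_ne_top
    _ ≤ _ := by
        refine (mul_le_mul_right hol _).trans (le_of_eq ?_)
        rw [← ENNReal.ofReal_mul (Real.exp_pos _).le]
        congr 1
        ring
end

section
/- Let n ≥ 1 be an integer and 0 < λ ≤ ρ. With m^λ_n(z) = C(n+z−1, n−1)·(λ/(1+λ))^z·(1/(1+λ))^n and m^ρ_n defined analogously, the series Σ_{z=0}^{∞} m^λ_n(z)²/m^ρ_n(z) converges and equals (1 − (ρ−λ)²/(ρ(1+ρ)))^{−n}. -/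
theorem negBin_term (C a r : ℝ) (k z : ℕ) (hc : 0 < C) (ha : 0 < a) (hr : 0 < r) :
    (C * (a / (1 + a)) ^ z * (1 / (1 + a)) ^ (k + 1)) ^ 2
      / (C * (r / (1 + r)) ^ z * (1 / (1 + r)) ^ (k + 1))
    = C * (a ^ 2 * (1 + r) / ((1 + a) ^ 2 * r)) ^ z * ((1 + r) / (1 + a) ^ 2) ^ (k + 1) := by
  have h1 : 0 < 1 + a := by linarith
  have h2 : 0 < 1 + r := by linarith
  have e1 : a ^ 2 * (1 + r) / ((1 + a) ^ 2 * r) = (a / (1 + a)) ^ 2 / (r / (1 + r)) := by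
    field_simp
  have e2 : (1 + r) / (1 + a) ^ 2 = (1 / (1 + a)) ^ 2 / (1 / (1 + r)) := by
    field_simp
  have p1 : 0 < r / (1 + r) := by positivity
  have p2 : 0 < 1 / (1 + r) := by positivity
  rw [e1, e2]
  generalize r / (1 + r) = x at *
  generalize 1 / (1 + r) = y at *
  generalize a / (1 + a) = u at *
  generalize 1 / (1 + a) = v at *
  generalize k + 1 = m at *
  rw [div_pow, div_pow, mul_pow, mul_pow, ← pow_mul, ← pow_mul, ← pow_mul, ← pow_mul,
    mul_comm 2 z, mul_comm 2 m]
  have q1 : x ^ z ≠ 0 := (pow_pos p1 z).ne'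
  have q2 : y ^ m ≠ 0 := (pow_pos p2 m).ne'
  have q3 := hc.ne'
  generalize x ^ z = X at *
  generalize y ^ m = Y at *
  generalize u ^ (z * 2) = U at *
  generalize v ^ (m * 2) = V at *
  field_simp

theorem negBin_val (a r : ℝ) (k : ℕ) (ha : 0 < a) (hr : 0 < r)
    (hD : 0 < r + 2 * a * r - a ^ 2) :
    1 / (1 - a ^ 2 * (1 + r) / ((1 + a) ^ 2 * r)) ^ (k + 1)
      * ((1 + r) / (1 + a) ^ 2) ^ (k + 1)
      = ((1 - (r - a) ^ 2 / (r * (1 + r))) ^ (k + 1))⁻¹ := by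
  have h1 : 0 < 1 + a := by linarith
  have h2 : 0 < 1 + r := by linarith
  have e1 : 1 - a ^ 2 * (1 + r) / ((1 + a) ^ 2 * r)
      = (r + 2 * a * r - a ^ 2) / ((1 + a) ^ 2 * r) := by
    field_simp
    ring
  have e2 : 1 - (r - a) ^ 2 / (r * (1 + r))
      = (r + 2 * a * r - a ^ 2) / (r * (1 + r)) := by
    field_simp
    ring
  rw [e1, e2, ← one_div_pow, ← mul_pow, ← inv_pow]
  congr 1
  have hD' := hD.ne'
  generalize r + 2 * a * r - a ^ 2 = D at *
  field_simp

theorem negBin_series (k : ℕ) (x c : ℝ) (h0 : 0 ≤ x) (h1 : x < 1) :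
    HasSum (fun z : ℕ => ((z + k).choose k : ℝ) * x ^ z * c) (1 / (1 - x) ^ (k + 1) * c) := by
  have hx : ‖x‖ < 1 := by rw [Real.norm_of_nonneg h0]; exact h1
  have h : HasSum (fun z : ℕ => ((z + k).choose k : ℝ) * x ^ z) (1 / (1 - x) ^ (k + 1)) :=
    hasSum_choose_mul_geometric_of_norm_lt_one k hx
  exact h.mul_right c

/-- For `n ≥ 1` and `0 < lam ≤ rho`, the series `∑_z m^lam_n(z)² / m^rho_n(z)` converges
and equals `(1 - (rho-lam)²/(rho(1+rho)))^{-n}`. -/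
theorem chi_squared_negBinomial
    (n : ℕ) (hn : 1 ≤ n) (lam rho : ℝ) (hlam : 0 < lam) (hle : lam ≤ rho) :
    HasSum (fun z : ℕ => (negBinPMF n lam z) ^ 2 / negBinPMF n rho z)
      (((1 - (rho - lam) ^ 2 / (rho * (1 + rho))) ^ n)⁻¹) := by
  obtain ⟨k, rfl⟩ : ∃ k, n = k + 1 := ⟨n - 1, by omega⟩
  have hrho : 0 < rho := lt_of_lt_of_le hlam hle
  have h1 : 0 < 1 + lam := by linarith
  have h2 : 0 < 1 + rho := by linarith
  have hD : 0 < rho + 2 * lam * rho - lam ^ 2 := by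
    nlinarith [mul_le_mul_of_nonneg_left hle hlam.le, mul_pos hlam hrho]
  have hr0 : 0 ≤ lam ^ 2 * (1 + rho) / ((1 + lam) ^ 2 * rho) := by positivity
  have hr1 : lam ^ 2 * (1 + rho) / ((1 + lam) ^ 2 * rho) < 1 := by
    rw [div_lt_one (by positivity)]
    linarith [show (1 + lam) ^ 2 * rho - lam ^ 2 * (1 + rho) = rho + 2 * lam * rho - lam ^ 2 by ring]
  have hs := negBin_series k _ (((1 + rho) / (1 + lam) ^ 2) ^ (k + 1)) hr0 hr1
  rw [negBin_val lam rho k hlam hrho hD] at hs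
  have hf : (fun z : ℕ => (negBinPMF (k + 1) lam z) ^ 2 / negBinPMF (k + 1) rho z) =
      fun z : ℕ => ((z + k).choose k : ℝ) * (lam ^ 2 * (1 + rho) / ((1 + lam) ^ 2 * rho)) ^ z
        * ((1 + rho) / (1 + lam) ^ 2) ^ (k + 1) := by
    funext z
    have hc : (0 : ℝ) < ((z + k).choose k : ℝ) := by
      exact_mod_cast Nat.choose_pos (Nat.le_add_left k z)
    have e3 : k + 1 + z - 1 = z + k := by omega
    unfold negBinPMF
    rw [e3, Nat.add_sub_cancel]
    exact negBin_term _ lam rho k z hc hlam hrho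
  rw [hf]
  exact hs
end

section
/- Let n ≥ 1 be an integer and 0 < λ ≤ ρ with (ρ−λ)² ≤ ρ(1+ρ)/2. Then for every function g from the nonnegative integers to [0,1], Σ_{z=0}^{∞} g(z)·m^λ_n(z) ≤ (Σ_{z=0}^{∞} g(z)·m^ρ_n(z))^{1/2} · exp(n(ρ−λ)²/(ρ(1+ρ))). -/
lemma nb_hasSum (k : ℕ) (r : ℝ) (h0 : 0 ≤ r) (h1 : r < 1) :
    HasSum (fun z : ℕ => (Nat.choose (k + 1 + z - 1) (k + 1 - 1) : ℝ) * r ^ z)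
      (1 / (1 - r) ^ (k + 1)) := by
  have h := hasSum_choose_mul_geometric_of_norm_lt_one k
    (r := r) (by rw [Real.norm_eq_abs, abs_of_nonneg h0]; exact h1)
  have e : ∀ z, k + 1 + z - 1 = z + k := fun z => by omega
  simpa only [e, Nat.add_sub_cancel] using h

lemma nb_pos (n : ℕ) (hn : 1 ≤ n) (a : ℝ) (ha : 0 < a) (z : ℕ) : 0 < negBinPMF n a z := by
  unfold negBinPMF
  have : 0 < Nat.choose (n + z - 1) (n - 1) := Nat.choose_pos (by omega)
  positivity

lemma nb_summable (n : ℕ) (hn : 1 ≤ n) (a : ℝ) (ha : 0 < a) : Summable (negBinPMF n a) := by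
  obtain ⟨k, rfl⟩ : ∃ k, n = k + 1 := ⟨n - 1, by omega⟩
  have h1 : a / (1 + a) < 1 := by rw [div_lt_one (by positivity)]; linarith
  exact (nb_hasSum k (a / (1 + a)) (by positivity) h1).summable.mul_right _

lemma nb_chi (n : ℕ) (hn : 1 ≤ n) (a b : ℝ) (ha : 0 < a) (hab : a ≤ b) :
    HasSum (fun z => negBinPMF n a z ^ 2 / negBinPMF n b z)
      ((1 - (b - a) ^ 2 / (b * (1 + b)))⁻¹ ^ n) := by
  obtain ⟨k, rfl⟩ : ∃ k, n = k + 1 := ⟨n - 1, by omega⟩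
  have hb : 0 < b := by linarith
  have hd : 0 < b + 2 * a * b - a ^ 2 := by nlinarith [mul_pos ha hb]
  have e1 : 1 - (a / (1 + a)) ^ 2 * ((1 + b) / b)
      = (b + 2 * a * b - a ^ 2) / ((1 + a) ^ 2 * b) := by
    field_simp
    ring
  have e2 : 1 - (b - a) ^ 2 / (b * (1 + b)) = (b + 2 * a * b - a ^ 2) / (b * (1 + b)) := by
    field_simp
    ring
  have h1 : (a / (1 + a)) ^ 2 * ((1 + b) / b) < 1 := by
    have : 0 < (b + 2 * a * b - a ^ 2) / ((1 + a) ^ 2 * b) := by positivity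
    linarith
  have h := (nb_hasSum k ((a / (1 + a)) ^ 2 * ((1 + b) / b)) (by positivity) h1).mul_right
    (((1 + b) / (1 + a) ^ 2) ^ (k + 1))
  convert! h using 1
  · funext z
    unfold negBinPMF
    have : 0 < Nat.choose (k + 1 + z - 1) (k + 1 - 1) := Nat.choose_pos (by omega)
    have hc : (0 : ℝ) < (Nat.choose (k + 1 + z - 1) (k + 1 - 1) : ℝ) := by exact_mod_cast this
    generalize (Nat.choose (k + 1 + z - 1) (k + 1 - 1) : ℝ) = c at hc
    generalize k + 1 = m
    simp only [div_pow, mul_pow, one_pow]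
    field_simp
    simp only [← pow_mul, mul_comm 2]
    ring
  · rw [e1, e2, one_div, ← inv_pow, ← mul_pow]
    congr 1
    field_simp

/-- The change-of-measure inequality underlying Lemma 4.2: for `n ≥ 1`,
`0 < lam ≤ rho` with `(rho-lam)² ≤ rho(1+rho)/2`, and any `g : ℕ → [0,1]`,
`∑_z g(z) m^lam_n(z) ≤ (∑_z g(z) m^rho_n(z))^{1/2} exp(n(rho-lam)²/(rho(1+rho)))`. -/
theorem change_of_measure_inequality
    (n : ℕ) (hn : 1 ≤ n) (lam rho : ℝ) (hlam : 0 < lam) (hle : lam ≤ rho)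
    (hclose : (rho - lam) ^ 2 ≤ rho * (1 + rho) / 2)
    (g : ℕ → ℝ) (hg : ∀ z, 0 ≤ g z ∧ g z ≤ 1) :
    ∑' z : ℕ, g z * negBinPMF n lam z ≤
      Real.sqrt (∑' z : ℕ, g z * negBinPMF n rho z) *
        Real.exp ((n : ℝ) * (rho - lam) ^ 2 / (rho * (1 + rho))) := by
  have hrho : 0 < rho := by linarith
  have hchi := nb_chi n hn lam rho hlam hle
  set x := (rho - lam) ^ 2 / (rho * (1 + rho)) with hx
  have hx0 : 0 ≤ x := by positivity
  have hx1 : x ≤ 1 / 2 := by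
    rw [hx, div_le_iff₀ (by positivity)]
    linarith
  have hK : (1 - x)⁻¹ ^ n ≤ Real.exp (n * x) ^ 2 := by
    have h1 : (1 - x)⁻¹ ≤ Real.exp (2 * x) := by
      rw [inv_le_iff_one_le_mul₀ (by linarith)]
      have := Real.add_one_le_exp (2 * x)
      nlinarith
    calc (1 - x)⁻¹ ^ n ≤ Real.exp (2 * x) ^ n :=
          pow_le_pow_left₀ (inv_nonneg.2 (by linarith)) h1 n
      _ = Real.exp (n * x) ^ 2 := by
          rw [← Real.exp_nat_mul, ← Real.exp_nat_mul]
          congr 1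
          push_cast
          ring
  have hsum : Summable (fun z => g z * negBinPMF n rho z) :=
    Summable.of_nonneg_of_le (fun z => mul_nonneg (hg z).1 (nb_pos n hn rho hrho z).le)
      (fun z => mul_le_of_le_one_left (nb_pos n hn rho hrho z).le (hg z).2)
      (nb_summable n hn rho hrho)
  rw [mul_div_assoc, ← hx]
  have hS0 : 0 ≤ ∑' z : ℕ, g z * negBinPMF n rho z :=
    tsum_nonneg fun z => mul_nonneg (hg z).1 (nb_pos n hn rho hrho z).le
  refine Real.tsum_le_of_sum_le (fun z => mul_nonneg (hg z).1 (nb_pos n hn lam hlam z).le) ?_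
  intro s
  refine abs_le_of_sq_le_sq' ?_ (by positivity) |>.2
  rw [mul_pow, Real.sq_sqrt hS0]
  have hcs := Finset.sum_sq_le_sum_mul_sum_of_sq_le_mul s
    (r := fun z => g z * negBinPMF n lam z)
    (f := fun z => g z * negBinPMF n rho z)
    (g := fun z => g z * (negBinPMF n lam z ^ 2 / negBinPMF n rho z))
    (fun z _ => mul_nonneg (hg z).1 (nb_pos n hn rho hrho z).le)
    (fun z _ => mul_nonneg (hg z).1
      (div_nonneg (sq_nonneg _) (nb_pos n hn rho hrho z).le))
    (fun z _ => le_of_eq (by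
      have := (nb_pos n hn rho hrho z).ne'
      field_simp))
  refine hcs.trans (mul_le_mul ?_ ?_ ?_ hS0)
  · exact hsum.sum_le_tsum s fun z _ => mul_nonneg (hg z).1 (nb_pos n hn rho hrho z).le
  · refine le_trans (Finset.sum_le_sum fun z _ => mul_le_of_le_one_left
      (div_nonneg (sq_nonneg _) (nb_pos n hn rho hrho z).le) (hg z).2) (le_trans ?_ hK)
    exact sum_le_hasSum s
      (fun z _ => div_nonneg (sq_nonneg _) (nb_pos n hn rho hrho z).le) hchi
  · exact Finset.sum_nonneg fun z _ => mul_nonneg (hg z).1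
      (div_nonneg (sq_nonneg _) (nb_pos n hn rho hrho z).le)
end
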